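/- For every finite alphabet 𝒜 with at least two symbols there exist a sequence (X_k)_{k≥1} of shift spaces over 𝒜, each consisting of a single periodic orbit, and an ergodic σ-invariant Borel probability measure μ on 𝒜^∞ with full support, such that d̄_M^H(M_σ(X_k), {μ}) → 0 as k → ∞. In particular, there exists no shift space X ⊆ 𝒜^∞ with M_σ(X) = {μ}. -/

import Mathlib

open MeasureTheory Filter Topology

namespace DbarPaper

variable {A : Type} [Fintype A] [DecidableEq A] [Inhabited A]
  [TopologicalSpace A] [DiscreteTopology A]
  [MeasurableSpace A] [MeasurableSingletonClass A]

/-- The shift map on the full shift `𝒜^∞ = ℕ → A`. -/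
def shift : (ℕ → A) → (ℕ → A) := fun x n => x (n + 1)

/-- A shift space: a nonempty, closed, shift-invariant subset of the full shift. -/
def ShiftSpace (X : Set (ℕ → A)) : Prop :=
  X.Nonempty ∧ IsClosed X ∧ ∀ x ∈ X, shift x ∈ X

/-- The word `w` appears in the sequence `x`. -/
def occursIn (w : List A) (x : ℕ → A) : Prop :=
  ∃ i : ℕ, w = List.ofFn (fun k : Fin w.length => x (i + (k : ℕ)))

/-- The language of a set `X`: all finite words appearing in points of `X`. -/
def lang (X : Set (ℕ → A)) : Set (List A) := {w | ∃ x ∈ X, occursIn w x}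

/-- Words of length `n` in the language of `X`. -/
def langN (n : ℕ) (X : Set (ℕ → A)) : Set (List A) := {w | w ∈ lang X ∧ w.length = n}

/-- The pseudometric `d̄` on the full shift. -/
noncomputable def dbar (x y : ℕ → A) : ℝ :=
  Filter.limsup
    (fun n => (((Finset.range n).filter (fun j => x j ≠ y j)).card : ℝ) / (n : ℝ))
    Filter.atTop

/-- Hausdorff "distance" between two sets induced by a `ℝ`-valued distance. -/
noncomputable def hausdist {Z : Type*} (d : Z → Z → ℝ) (P Q : Set Z) : ℝ :=
  max (⨆ p : P, ⨅ q : Q, d p q) (⨆ q : Q, ⨅ p : P, d p q)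

/-- A probability measure is shift-invariant. -/
def invariantPM (μ : ProbabilityMeasure (ℕ → A)) : Prop :=
  (μ : Measure (ℕ → A)).map shift = (μ : Measure (ℕ → A))

/-- `M_σ(X)`: shift-invariant Borel probability measures giving `X` full measure. -/
def Msigma (X : Set (ℕ → A)) : Set (ProbabilityMeasure (ℕ → A)) :=
  {μ | invariantPM μ ∧ μ X = 1}

/-- `ξ` is a joining of `μ` and `ν`: a `σ×σ`-invariant measure on the product with
marginals `μ` and `ν`. -/
def IsJoining (ξ : Measure ((ℕ → A) × (ℕ → A))) (μ ν : ProbabilityMeasure (ℕ → A)) : Prop :=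
  ξ.map (Prod.map shift shift) = ξ ∧
  ξ.map Prod.fst = (μ : Measure (ℕ → A)) ∧ ξ.map Prod.snd = (ν : Measure (ℕ → A))

/-- Ornstein's metric `d̄_M` on invariant measures. -/
noncomputable def dbarM (μ ν : ProbabilityMeasure (ℕ → A)) : ℝ :=
  sInf {r : ℝ | ∃ ξ : Measure ((ℕ → A) × (ℕ → A)),
    IsJoining ξ μ ν ∧ r = (ξ {p | p.1 0 ≠ p.2 0}).toReal}

/-- `d̄_M`-stability of a shift space (Austin). -/
def DbarMStable (X : Set (ℕ → A)) : Prop :=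
  ∀ ε : ℝ, 0 < ε → ∃ U : Set (ProbabilityMeasure (ℕ → A)), IsOpen U ∧ Msigma X ⊆ U ∧
    ∀ ν ∈ U, invariantPM ν → ∃ μ ∈ Msigma X, dbarM μ ν < ε

/-- The infinite concatenation of a sequence of (nonempty) words. -/
def concatSeq (w : ℕ → List A) : ℕ → A := fun n =>
  ((List.ofFn (fun i : Fin (n + 1) => w (i : ℕ))).flatten).getD n default

/-- The `d̄`-shadowing property. -/
def DbarShadowing (X : Set (ℕ → A)) : Prop :=
  ∀ ε : ℝ, 0 < ε → ∃ N : ℕ, 0 < N ∧ ∀ w : ℕ → List A,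
    (∀ j, w j ∈ lang X) → (∀ j, N ≤ (w j).length) →
    ∃ x' ∈ X, dbar (concatSeq w) x' < ε

/-- `U_n(X)`: the union of cylinders of words of length `n` in the language of `X`. -/
def cylNbhd (X : Set (ℕ → A)) (n : ℕ) : Set (ℕ → A) :=
  {x | List.ofFn (fun k : Fin n => x (k : ℕ)) ∈ lang X}

/-- The `n`-th (topological) Markov approximation of `X`: all sequences whose subwords of
length `n+1` belong to the language of `X`. -/
def markovApprox (X : Set (ℕ → A)) (n : ℕ) : Set (ℕ → A) :=
  {x | ∀ i : ℕ, List.ofFn (fun k : Fin (n + 1) => x (i + (k : ℕ))) ∈ lang X}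

/-- Transitivity, in terms of the language. -/
def TransitiveShift (X : Set (ℕ → A)) : Prop :=
  ∀ u ∈ lang X, ∀ w ∈ lang X, ∃ v : List A, u ++ v ++ w ∈ lang X

/-- Topological mixing, in terms of the language. -/
def MixingShift (X : Set (ℕ → A)) : Prop :=
  ∀ u ∈ lang X, ∀ w ∈ lang X, ∃ N : ℕ, ∀ m : ℕ, N ≤ m →
    ∃ v : List A, v.length = m ∧ u ++ v ++ w ∈ lang X

/-- Chain mixing: all but finitely many Markov approximations are topologically mixing. -/
def ChainMixing (X : Set (ℕ → A)) : Prop :=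
  ∃ N : ℕ, ∀ n : ℕ, N ≤ n → MixingShift (markovApprox X n)

/-- `C` is the measure center of `X`: the smallest shift space contained in `X` of full
measure for every invariant measure of `X`. -/
def IsMeasureCenter (X C : Set (ℕ → A)) : Prop :=
  ShiftSpace C ∧ C ⊆ X ∧ (∀ μ ∈ Msigma X, μ C = 1) ∧
  ∀ Y : Set (ℕ → A), ShiftSpace Y → Y ⊆ X → (∀ μ ∈ Msigma X, μ Y = 1) → C ⊆ Y

/-- Measure of the cylinder determined by a word of length `n`. -/
noncomputable def cylMeasure (μ : ProbabilityMeasure (ℕ → A)) {n : ℕ} (w : Fin n → A) : ℝ :=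
  ((μ : Measure (ℕ → A)) {x | ∀ k : Fin n, x (k : ℕ) = w k}).toReal

/-- Entropy of the partition into cylinders of length `n`. -/
noncomputable def blockEntropy (μ : ProbabilityMeasure (ℕ → A)) (n : ℕ) : ℝ :=
  -∑ w : Fin n → A, cylMeasure μ w * Real.log (cylMeasure μ w)

/-- Kolmogorov–Sinai entropy of a shift-invariant measure. -/
noncomputable def ksEntropy (μ : ProbabilityMeasure (ℕ → A)) : ℝ :=
  Filter.limsup (fun n => blockEntropy μ n / (n : ℝ)) Filter.atTop

/-- `μ` is ergodic for the shift. -/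
def ErgodicPM (μ : ProbabilityMeasure (ℕ → A)) : Prop :=
  Ergodic shift (μ : Measure (ℕ → A))

/-- Ergodic measures are entropy dense in `M_σ(X)`. -/
def EntropyDense (X : Set (ℕ → A)) : Prop :=
  ∀ μ ∈ Msigma X, ∀ U : Set (ProbabilityMeasure (ℕ → A)), IsOpen U → μ ∈ U →
    ∀ ε : ℝ, 0 < ε →
      ∃ ν ∈ Msigma X, ν ∈ U ∧ ErgodicPM ν ∧ |ksEntropy ν - ksEntropy μ| < ε

/-- Topological entropy of a shift space. -/
noncomputable def topEntropy (X : Set (ℕ → A)) : ℝ :=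
  Filter.limsup (fun n => Real.log (Nat.card ↥(langN n X)) / (n : ℝ)) Filter.atTop

/-- The standard metric on the full shift. -/
noncomputable def rho (x y : ℕ → A) : ℝ :=
  open scoped Classical in
  if x = y then 0 else (2 : ℝ) ^ (-((sInf {j : ℕ | x j ≠ y j} : ℕ) : ℤ))

/-- Proximality of a shift space. -/
def ProximalShift (X : Set (ℕ → A)) : Prop :=
  ∀ x ∈ X, ∀ y ∈ X,
    Filter.liminf (fun n => rho (shift^[n] x) (shift^[n] y)) Filter.atTop = 0

/-- Minimality of a shift space. -/
def MinimalShift (X : Set (ℕ → A)) : Prop :=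
  ShiftSpace X ∧ ∀ Y : Set (ℕ → A), ShiftSpace Y → Y ⊆ X → Y = X

/-- An `A`-labeled directed multigraph on vertices `V` with edges `E`. -/
structure LabeledGraph (A V E : Type*) where
  src : E → V
  dst : E → V
  lab : E → A

namespace LabeledGraph

variable {A' V E : Type*}

/-- `es` is a path in `G` from `u` to `v`. -/
def PathFromTo (G : LabeledGraph A' V E) (es : List E) (u v : V) : Prop :=
  es.Chain' (fun e f => G.dst e = G.src f) ∧
  es.head?.map G.src = some u ∧ es.getLast?.map G.dst = some v

/-- `G` is strongly connected. -/
def StronglyConnected (G : LabeledGraph A' V E) : Prop :=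
  ∀ u v : V, ∃ es : List E, G.PathFromTo es u v

/-- `d` is the period of `G`: the gcd of lengths of closed paths. -/
def HasPeriod (G : LabeledGraph A' V E) (d : ℕ) : Prop :=
  (∀ (es : List E) (u : V), G.PathFromTo es u u → d ∣ es.length) ∧
  ∀ d' : ℕ, (∀ (es : List E) (u : V), G.PathFromTo es u u → d' ∣ es.length) → d' ∣ d

/-- `b` is a safe symbol for `G`. -/
def SafeSymbol (G : LabeledGraph A' V E) (b : A') : Prop :=
  ∀ e : E, ∃ e' : E, G.src e' = G.src e ∧ G.dst e' = G.dst e ∧ G.lab e' = b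

/-- The shift space presented by the labeled graph `G`: labels read along infinite paths. -/
def presents (G : LabeledGraph A' V E) : Set (ℕ → A') :=
  {x | ∃ e : ℕ → E, (∀ j, G.dst (e j) = G.src (e (j + 1))) ∧ ∀ j, x j = G.lab (e j)}

end LabeledGraph

/-- The coupling of a family of labeled graphs: an edge labeled `a` from `v` to `v'` exists
iff each `G k` has an edge from `v k` to `v' k` labeled `a`. -/
def coupling {A' : Type*} {n : ℕ} {V E : Fin n → Type*}
    (G : ∀ k, LabeledGraph A' (V k) (E k)) :
    LabeledGraph A' (∀ k, V k) {p : (∀ k, E k) × A' // ∀ k, (G k).lab (p.1 k) = p.2} where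
  src p := fun k => (G k).src (p.1.1 k)
  dst p := fun k => (G k).dst (p.1.1 k)
  lab p := p.1.2

/-- Sofic shift spaces: those presented by some finite labeled graph. -/
def Sofic (X : Set (ℕ → A)) : Prop :=
  ∃ (V E : Type) (_ : Fintype V) (_ : Fintype E) (G : LabeledGraph A V E),
    X = G.presents

/-- The coded shift generated by a finite set of words `B`: the closure of the set of all
shifts of infinite concatenations of words from `B`. -/
def codedShift (B : Finset (List A)) : Set (ℕ → A) :=
  closure {x | ∃ (b : ℕ → List A) (k : ℕ), (∀ i, b i ∈ B) ∧ x = shift^[k] (concatSeq b)}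

/-!
All measures are taken to be laws of stationary processes `g, g ∘ T, g ∘ T², …` over a single
ergodic system, the 2-adic odometer `T ω = 1 + ω` on `ℤ_[2]` with its Haar measure `m`. Two such
processes are joined by running them on the same `ω`, so `d̄_M` of their laws is at most
`m {g ≠ h}`. If `g` depends on finitely many digits, all its itineraries lie on one periodic orbit,
which carries only one invariant measure.

Let `W k` be a sequence of patterns visiting every nonempty open set infinitely often, and overwrite
a constant observable successively: stage `k` writes the first `k` symbols of `W k` at the start of
every block of length `2 ^ (4 * k ^ 2)`. The affected sets have summable measure, so the observables
converge almost everywhere and the laws converge in `d̄_M`. The block lengths grow so fast that the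
stages after `k` cannot destroy all the copies written at stage `k`; hence every cylinder has
positive measure in the limit. Finally, a shift space carrying a fully supported measure is the full
shift, which has many invariant measures.
-/

section PeriodicOrbit

variable {α : Type*} {f : α → α} {x : α}

/-- The set of iterates of `x` under `f`. The membership predicate is spelled `y = f^[j] x`, as in
the description of the single periodic orbits `X k` of the main theorem. -/
def forwardOrbit (f : α → α) (x : α) : Set α := {y | ∃ j : ℕ, y = f^[j] x}

lemma finite_forwardOrbit (hx : x ∈ Function.periodicPts f) : (forwardOrbit f x).Finite := by
  obtain ⟨p, hp, hpx⟩ := hx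
  refine ((Finset.range p).finite_toSet.image fun j => f^[j] x).subset ?_
  rintro _ ⟨j, rfl⟩
  exact ⟨j % p, by simpa using Nat.mod_lt j hp, hpx.iterate_mod_apply j⟩

variable [MeasurableSpace α] [MeasurableSingletonClass α] {ν : Measure α}

lemma measure_singleton_le_of_measurePreserving (hf : MeasurePreserving f ν ν) (y : α) :
    ν {y} ≤ ν {f y} :=
  calc ν {y} ≤ ν (f ⁻¹' {f y}) := measure_mono (by simp)
    _ = ν {f y} := hf.measure_preimage (measurableSet_singleton _).nullMeasurableSet

/-- Point masses increase along the orbit, and the orbit returns to its starting point. -/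
lemma measure_singleton_iterate_of_mem_periodicPts (hf : MeasurePreserving f ν ν)
    (hx : x ∈ Function.periodicPts f) (j : ℕ) : ν {f^[j] x} = ν {x} := by
  obtain ⟨p, hp, hpx⟩ := hx
  have hmono : Monotone fun i => ν {f^[i] x} := monotone_nat_of_le_succ fun i => by
    simpa only [Function.iterate_succ_apply'] using
      measure_singleton_le_of_measurePreserving hf (f^[i] x)
  refine le_antisymm ?_ (hmono j.zero_le)
  calc ν {f^[j] x} ≤ ν {f^[j * p] x} := hmono (Nat.le_mul_of_pos_right j hp)
    _ = ν {x} := by rw [(hpx.const_mul j).eq]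

lemma eq_uniformOn_forwardOrbit [IsProbabilityMeasure ν] (hf : MeasurePreserving f ν ν)
    (hx : x ∈ Function.periodicPts f) (hν : ν (forwardOrbit f x) = 1) :
    ν = ProbabilityTheory.uniformOn (forwardOrbit f x) := by
  have hfin := finite_forwardOrbit hx
  have hcount : ∀ s ⊆ forwardOrbit f x, ν s = Measure.count s * ν {x} := by
    intro s hs
    lift s to Finset α using hfin.subset hs
    have hmass : ∀ y ∈ s, ν {y} = ν {x} := fun y hy => by
      obtain ⟨j, rfl⟩ := hs hy
      exact measure_singleton_iterate_of_mem_periodicPts hf hx j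
    rw [← sum_measure_singleton, Finset.sum_congr rfl hmass, Finset.sum_const, nsmul_eq_mul,
      Measure.count_apply_finset]
  have hpoint : ν {x} = (Measure.count (forwardOrbit f x))⁻¹ :=
    ENNReal.eq_inv_of_mul_eq_one_left (by rw [mul_comm, ← hcount _ subset_rfl, hν])
  have hnull : ν (forwardOrbit f x)ᶜ = 0 := (prob_compl_eq_zero_iff hfin.measurableSet).2 hν
  ext s _
  rw [ProbabilityTheory.uniformOn, ProbabilityTheory.cond_apply hfin.measurableSet, ← hpoint,
    mul_comm, ← hcount _ Set.inter_subset_left, Set.inter_comm, measure_inter_conull hnull]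

end PeriodicOrbit

section InvariantMeasures

variable {B : Type}

lemma shiftSpace_forwardOrbit [TopologicalSpace B] [T1Space B] {x : ℕ → B}
    (hx : x ∈ Function.periodicPts shift) : ShiftSpace (forwardOrbit shift x) := by
  refine ⟨⟨x, 0, rfl⟩, (finite_forwardOrbit hx).isClosed, ?_⟩
  rintro _ ⟨j, rfl⟩
  exact ⟨j + 1, (Function.iterate_succ_apply' _ _ _).symm⟩

lemma hausdist_singleton {Z : Type*} (d : Z → Z → ℝ) (a b : Z) : hausdist d {a} {b} = d a b := by
  simp [hausdist]

variable [MeasurableSpace B]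

lemma measurable_shift : Measurable (shift : (ℕ → B) → ℕ → B) :=
  measurable_pi_lambda _ fun n => measurable_pi_apply (n + 1)

lemma mem_Msigma_iff {X : Set (ℕ → B)} {μ : ProbabilityMeasure (ℕ → B)} :
    μ ∈ Msigma X ↔ MeasurePreserving shift (μ : Measure (ℕ → B)) μ ∧
      (μ : Measure (ℕ → B)) X = 1 := by
  rw [← ProbabilityMeasure.ennreal_coeFn_eq_coeFn_toMeasure, ENNReal.coe_eq_one]
  exact and_congr_left fun _ => ⟨fun h => ⟨measurable_shift, h⟩, fun h => h.map_eq⟩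

lemma Msigma_forwardOrbit_subsingleton [MeasurableSingletonClass B] {x : ℕ → B}
    (hx : x ∈ Function.periodicPts shift) : (Msigma (forwardOrbit shift x)).Subsingleton := by
  intro μ hμ ν hν
  rw [mem_Msigma_iff] at hμ hν
  exact Subtype.ext <| (eq_uniformOn_forwardOrbit hμ.1 hx hμ.2).trans
    (eq_uniformOn_forwardOrbit hν.1 hx hν.2).symm

lemma diracProba_mem_Msigma_univ {x : ℕ → B} (hx : shift x = x) :
    diracProba x ∈ Msigma (Set.univ : Set (ℕ → B)) := by
  refine mem_Msigma_iff.2 ⟨⟨measurable_shift, ?_⟩, measure_univ⟩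
  change (Measure.dirac x).map shift = Measure.dirac x
  rw [Measure.map_dirac' measurable_shift, hx]

lemma Msigma_univ_nontrivial [MeasurableSingletonClass B] [Nontrivial B] :
    (Msigma (Set.univ : Set (ℕ → B))).Nontrivial := by
  obtain ⟨a, b, hab⟩ := exists_pair_ne B
  exact ⟨_, diracProba_mem_Msigma_univ (x := fun _ => a) rfl, _,
    diracProba_mem_Msigma_univ (x := fun _ => b) rfl,
    fun h => hab (congrFun (injective_diracProba h) 0)⟩

lemma not_exists_Msigma_eq_singleton [TopologicalSpace B] [OpensMeasurableSpace (ℕ → B)]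
    [MeasurableSingletonClass B] [Nontrivial B] (μ : ProbabilityMeasure (ℕ → B))
    [(μ : Measure (ℕ → B)).IsOpenPosMeasure] :
    ¬ ∃ Z : Set (ℕ → B), ShiftSpace Z ∧ Msigma Z = {μ} := by
  rintro ⟨Z, ⟨-, hZ, -⟩, hμ⟩
  have hone : (μ : Measure (ℕ → B)) Z = 1 := (mem_Msigma_iff.1 (hμ ▸ Set.mem_singleton μ)).2
  obtain rfl : Z = Set.univ := hZ.measure_eq_one_iff_eq_univ.1 hone
  exact Msigma_univ_nontrivial.ne_singleton hμ

lemma dbarM_nonneg (μ ν : ProbabilityMeasure (ℕ → B)) : 0 ≤ dbarM μ ν :=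
  Real.sInf_nonneg (by rintro _ ⟨ξ, -, rfl⟩; exact ENNReal.toReal_nonneg)

lemma dbarM_le_of_isJoining {μ ν : ProbabilityMeasure (ℕ → B)}
    {ξ : Measure ((ℕ → B) × (ℕ → B))} (h : IsJoining ξ μ ν) :
    dbarM μ ν ≤ (ξ {p | p.1 0 ≠ p.2 0}).toReal :=
  csInf_le ⟨0, by rintro _ ⟨ξ, -, rfl⟩; exact ENNReal.toReal_nonneg⟩ ⟨ξ, h, rfl⟩

end InvariantMeasures

section Itinerary

variable {Ω : Type*} {B : Type} {T : Ω → Ω} {g h : Ω → B}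

/-- The sequence of values of the observable `g` along the `T`-orbit of `ω`; as a function of `ω`
it is the factor map from `T` to the shift determined by `g`. -/
def itinerary (T : Ω → Ω) (g : Ω → B) (ω : Ω) : ℕ → B := fun n => g (T^[n] ω)

lemma semiconj_itinerary (T : Ω → Ω) (g : Ω → B) :
    Function.Semiconj (itinerary T g) T shift := fun _ => rfl

variable [MeasurableSpace Ω] [MeasurableSpace B] {m : Measure Ω}

lemma measurable_itinerary (hT : Measurable T) (hg : Measurable g) :
    Measurable (itinerary T g) :=
  measurable_pi_lambda _ fun n => hg.comp (hT.iterate n)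

variable [IsProbabilityMeasure m]

/-- The distribution of the stationary process `g, g ∘ T, g ∘ T^[2], …`. -/
noncomputable def itineraryLaw (hT : MeasurePreserving T m m) (hg : Measurable g) :
    ProbabilityMeasure (ℕ → B) :=
  ⟨m.map (itinerary T g),
    Measure.isProbabilityMeasure_map (measurable_itinerary hT.measurable hg).aemeasurable⟩

lemma measurePreserving_itinerary (hT : MeasurePreserving T m m) (hg : Measurable g) :
    MeasurePreserving (itinerary T g) m (itineraryLaw hT hg : Measure (ℕ → B)) :=
  (measurable_itinerary hT.measurable hg).measurePreserving m

lemma measurePreserving_shift_itineraryLaw (hT : MeasurePreserving T m m) (hg : Measurable g) :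
    MeasurePreserving shift (itineraryLaw hT hg : Measure (ℕ → B)) (itineraryLaw hT hg) :=
  (measurePreserving_itinerary hT hg).of_semiconj hT (semiconj_itinerary T g) measurable_shift

lemma ergodicPM_itineraryLaw (hT : Ergodic T m) (hg : Measurable g) :
    ErgodicPM (itineraryLaw hT.toMeasurePreserving hg) :=
  (measurePreserving_itinerary hT.toMeasurePreserving hg).ergodic_of_ergodic_semiconj hT
    measurable_shift (semiconj_itinerary T g)

lemma Msigma_forwardOrbit_eq_itineraryLaw [MeasurableSingletonClass B]
    (hT : MeasurePreserving T m m) (hg : Measurable g) {x : ℕ → B}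
    (hx : x ∈ Function.periodicPts shift) (hgx : ∀ ω, itinerary T g ω ∈ forwardOrbit shift x) :
    Msigma (forwardOrbit shift x) = {itineraryLaw hT hg} := by
  refine (Msigma_forwardOrbit_subsingleton hx).eq_singleton_of_mem
    (mem_Msigma_iff.2 ⟨measurePreserving_shift_itineraryLaw hT hg, ?_⟩)
  rw [← (measurePreserving_itinerary hT hg).measure_preimage
    (finite_forwardOrbit hx).measurableSet.nullMeasurableSet, Set.preimage_eq_univ_iff.2
    (Set.range_subset_iff.2 hgx), measure_univ]

lemma isJoining_map_itinerary (hT : MeasurePreserving T m m) (hg : Measurable g)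
    (hh : Measurable h) :
    IsJoining (m.map fun ω => (itinerary T g ω, itinerary T h ω)) (itineraryLaw hT hg)
      (itineraryLaw hT hh) := by
  have hG := measurable_itinerary hT.measurable hg
  have hH := measurable_itinerary hT.measurable hh
  have hsemi : Function.Semiconj (fun ω => (itinerary T g ω, itinerary T h ω)) T
      (Prod.map shift shift) := fun _ => rfl
  exact ⟨(((hG.prodMk hH).measurePreserving m).of_semiconj hT hsemi
      (measurable_shift.prodMap measurable_shift)).map_eq,
    Measure.map_map measurable_fst (hG.prodMk hH), Measure.map_map measurable_snd (hG.prodMk hH)⟩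

lemma dbarM_itineraryLaw_le [MeasurableEq B] (hT : MeasurePreserving T m m) (hg : Measurable g)
    (hh : Measurable h) :
    dbarM (itineraryLaw hT hg) (itineraryLaw hT hh) ≤ (m {ω | g ω ≠ h ω}).toReal := by
  have hne : MeasurableSet {p : (ℕ → B) × (ℕ → B) | p.1 0 ≠ p.2 0} :=
    (measurableSet_eq_fun ((measurable_pi_apply 0).comp measurable_fst)
      ((measurable_pi_apply 0).comp measurable_snd)).compl
  refine (dbarM_le_of_isJoining (isJoining_map_itinerary hT hg hh)).trans_eq ?_
  rw [Measure.map_apply ((measurable_itinerary hT.measurable hg).prodMk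
    (measurable_itinerary hT.measurable hh)) hne]
  rfl

end Itinerary

section StableLimit

variable {Ω B : Type*} {f : ℕ → Ω → B} {V : ℕ → Set Ω}

/-- The pointwise limit of a sequence of functions `f` such that `f (j + 1)` differs from `f j`
only on `V j`: its value at `ω` is `f n ω`, where `n` is the first stage after which `ω` avoids
every `V j`. At a point lying in infinitely many `V j` the value is `f 0 ω`, as `sInf ∅ = 0`. -/
noncomputable def stableLimit (f : ℕ → Ω → B) (V : ℕ → Set Ω) (ω : Ω) : B :=
  f (sInf {n | ∀ j ≥ n, ω ∉ V j}) ω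

lemma stableLimit_eq (hfV : ∀ j, ∀ ω ∉ V j, f (j + 1) ω = f j ω) {k : ℕ} {ω : Ω}
    (hω : ∀ j ≥ k, ω ∉ V j) : stableLimit f V ω = f k ω := by
  set n := sInf {n | ∀ j ≥ n, ω ∉ V j}
  have hn : ∀ j ≥ n, ω ∉ V j := Nat.sInf_mem (s := {n | ∀ j ≥ n, ω ∉ V j}) ⟨k, hω⟩
  have hnk : n ≤ k := Nat.sInf_le hω
  change f n ω = f k ω
  induction k, hnk using Nat.le_induction with
  | base => rfl
  | succ j hj ih => rw [hfV j ω (hn j hj), ih fun i hi => hn i (hj.trans hi)]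

variable [MeasurableSpace Ω]

lemma measurable_stableLimit [MeasurableSpace B] (hfV : ∀ j, ∀ ω ∉ V j, f (j + 1) ω = f j ω)
    (hf : ∀ j, Measurable (f j)) (hV : ∀ j, MeasurableSet (V j)) :
    Measurable (stableLimit f V) := by
  have hE (n : ℕ) : MeasurableSet {ω | ∀ j ≥ n, ω ∉ V j} := by
    simp only [Set.ofPred_forall]
    exact .iInter fun j => .iInter fun _ => (hV j).compl
  intro S hS
  have hpre : stableLimit f V ⁻¹' S = (⋃ n, {ω | ∀ j ≥ n, ω ∉ V j} ∩ f n ⁻¹' S) ∪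
      (⋃ n, {ω | ∀ j ≥ n, ω ∉ V j})ᶜ ∩ f 0 ⁻¹' S := by
    ext ω
    by_cases hω : ∃ n, ∀ j ≥ n, ω ∉ V j
    · have hval : ∀ n, (∀ j ≥ n, ω ∉ V j) → stableLimit f V ω = f n ω := fun n => stableLimit_eq hfV
      simp only [Set.mem_union, Set.mem_inter_iff, Set.mem_iUnion, Set.mem_compl_iff,
        Set.mem_preimage, Set.mem_ofPred_eq, hω, not_true, false_and, or_false]
      exact ⟨fun h => hω.imp fun n hn => ⟨hn, hval n hn ▸ h⟩, fun ⟨n, hn, h⟩ => hval n hn ▸ h⟩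
    · have hval : stableLimit f V ω = f 0 ω := congrArg (f · ω) <|
        Nat.sInf_eq_zero.2 <| .inr <| Set.eq_empty_of_forall_notMem <| not_exists.1 hω
      simp [hval, not_exists.1 hω]
  rw [hpre]
  exact (MeasurableSet.iUnion fun n => (hE n).inter (hf n hS)).union
    ((MeasurableSet.iUnion hE).compl.inter (hf 0 hS))

lemma measure_ne_stableLimit_le (hfV : ∀ j, ∀ ω ∉ V j, f (j + 1) ω = f j ω) (m : Measure Ω)
    (k : ℕ) : m {ω | f k ω ≠ stableLimit f V ω} ≤ ∑' l, m (V (l + k)) := by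
  refine (measure_mono fun ω hω => ?_).trans (measure_iUnion_le _)
  contrapose! hω
  simp only [Set.mem_iUnion, not_exists] at hω
  refine not_not.2 (stableLimit_eq hfV fun j hj => ?_).symm
  simpa [hj] using hω (j - k)

end StableLimit

section Odometer

lemma measure_preimage_singleton_eq_inv_card {G H : Type*} [AddGroup G] [MeasurableSpace G]
    [MeasurableAdd G] [AddGroup H] [Fintype H] (m : Measure G) [IsProbabilityMeasure m]
    [m.IsAddLeftInvariant] {φ : G →+ H} (hφ : Function.Surjective φ)
    (hmeas : ∀ c, MeasurableSet (φ ⁻¹' {c})) (c : H) :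
    m (φ ⁻¹' {c}) = (Fintype.card H : ENNReal)⁻¹ := by
  have htranslate : ∀ d, m (φ ⁻¹' {d}) = m (φ ⁻¹' {c}) := fun d => by
    obtain ⟨a, ha⟩ := hφ (d - c)
    rw [← measure_preimage_add m a (φ ⁻¹' {d})]
    congr 1
    ext ω
    simp only [Set.mem_preimage, Set.mem_singleton_iff, map_add, ha, sub_eq_add_neg, add_assoc,
      add_eq_left, neg_add_eq_zero, eq_comm (a := c)]
  refine ENNReal.eq_inv_of_mul_eq_one_left ?_
  have hsum := sum_measure_preimage_singleton (μ := m) Finset.univ (f := φ) fun d _ => hmeas d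
  simpa [htranslate, mul_comm] using hsum

variable {p : ℕ} [Fact p.Prime]

lemma isLocallyConstant_toZModPow (n : ℕ) :
    IsLocallyConstant (PadicInt.toZModPow n : ℤ_[p] → ZMod (p ^ n)) := by
  refine (IsLocallyConstant.iff_exists_open _).2 fun ω => ⟨Metric.ball ω ((p : ℝ) ^ (-n : ℤ)),
    Metric.isOpen_ball, Metric.mem_ball_self (zpow_pos (mod_cast (Fact.out : p.Prime).pos) _),
    fun ω' hω' => ?_⟩
  rw [Metric.mem_ball, dist_eq_norm] at hω'
  rw [← sub_eq_zero, ← map_sub, ← RingHom.mem_ker, PadicInt.ker_toZModPow]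
  exact (PadicInt.norm_le_pow_iff_mem_span_pow _ n).1 hω'.le

lemma factorsThrough_toZModPow {n N : ℕ} (h : n ≤ N) :
    (PadicInt.toZModPow n : ℤ_[p] → ZMod (p ^ n)).FactorsThrough (PadicInt.toZModPow N) :=
  fun ω ω' hω => by rw [← PadicInt.cast_toZModPow n N h, hω, PadicInt.cast_toZModPow n N h]

section Periodic

variable {B : Type} {g : ℤ_[p] → B} {N : ℕ}

lemma itinerary_one_add_apply (g : ℤ_[p] → B) (ω : ℤ_[p]) (n : ℕ) :
    itinerary (1 + ·) g ω n = g (n + ω) := by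
  simp [itinerary, add_left_iterate]

lemma shift_iterate_itinerary_one_add (g : ℤ_[p] → B) (ω : ℤ_[p]) (j : ℕ) :
    shift^[j] (itinerary (1 + ·) g ω) = itinerary (1 + ·) g (j + ω) := by
  rw [← ((semiconj_itinerary (1 + ·) g).iterate_right j).eq, add_left_iterate, nsmul_one]

lemma factorsThrough_itinerary_one_add (hg : g.FactorsThrough (PadicInt.toZModPow N)) :
    (itinerary (1 + ·) g).FactorsThrough (PadicInt.toZModPow N) := fun ω ω' hω =>
  funext fun n => by
    simp only [itinerary_one_add_apply]
    exact hg (by simp only [map_add, hω])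

lemma isPeriodicPt_shift_itinerary_one_add (hg : g.FactorsThrough (PadicInt.toZModPow N))
    (ω : ℤ_[p]) : Function.IsPeriodicPt shift (p ^ N) (itinerary (1 + ·) g ω) := by
  rw [Function.IsPeriodicPt, Function.IsFixedPt, shift_iterate_itinerary_one_add]
  exact factorsThrough_itinerary_one_add hg
    (by rw [map_add, map_natCast, ZMod.natCast_self, zero_add])

lemma itinerary_one_add_mem_forwardOrbit (hg : g.FactorsThrough (PadicInt.toZModPow N))
    (ω : ℤ_[p]) : itinerary (1 + ·) g ω ∈ forwardOrbit shift (itinerary (1 + ·) g 0) := by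
  have : NeZero (p ^ N) := ⟨pow_ne_zero N (Fact.out : p.Prime).ne_zero⟩
  refine ⟨(PadicInt.toZModPow N ω).val, ?_⟩
  rw [shift_iterate_itinerary_one_add]
  exact factorsThrough_itinerary_one_add hg (by simp)

end Periodic

variable [MeasurableSpace ℤ_[p]] [BorelSpace ℤ_[p]]

lemma ergodic_one_add (m : Measure ℤ_[p]) [IsProbabilityMeasure m] [m.IsAddLeftInvariant] :
    Ergodic (1 + ·) m :=
  ergodic_add_left_of_denseRange_nsmul (by simpa using PadicInt.denseRange_natCast (p := p)) m

lemma Msigma_forwardOrbit_itinerary_one_add {B : Type} [MeasurableSpace B]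
    [MeasurableSingletonClass B] (m : Measure ℤ_[p]) [IsProbabilityMeasure m]
    [m.IsAddLeftInvariant] {g : ℤ_[p] → B} {N : ℕ} (hgN : g.FactorsThrough (PadicInt.toZModPow N))
    (hg : Measurable g) :
    Msigma (forwardOrbit shift (itinerary (1 + ·) g 0)) =
      {itineraryLaw (measurePreserving_add_left m 1) hg} :=
  Msigma_forwardOrbit_eq_itineraryLaw _ hg
    ⟨_, pow_pos (Fact.out : p.Prime).pos N, isPeriodicPt_shift_itinerary_one_add hgN 0⟩
    (itinerary_one_add_mem_forwardOrbit hgN)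

lemma measure_toZModPow_preimage_singleton (m : Measure ℤ_[p]) [IsProbabilityMeasure m]
    [m.IsAddLeftInvariant] (n : ℕ) (c : ZMod (p ^ n)) :
    m (PadicInt.toZModPow n ⁻¹' {c}) = ((p : ENNReal) ^ n)⁻¹ := by
  have : NeZero (p ^ n) := ⟨pow_ne_zero n (Fact.out : p.Prime).ne_zero⟩
  have := measure_preimage_singleton_eq_inv_card m
    (φ := (PadicInt.toZModPow n : ℤ_[p] →+* ZMod (p ^ n)).toAddMonoidHom)
    (ZMod.ringHom_surjective _)
    (fun c => ((isLocallyConstant_toZModPow n).isOpen_fiber c).measurableSet) c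
  simpa using this

end Odometer

section Blocks

open scoped ENNReal

/-- The position of `ω` inside its block of level `k`: read along an orbit of `1 + ·`, it runs
cyclically through `0, …, 2 ^ (4 * k ^ 2) - 1`. -/
noncomputable def phase (k : ℕ) (ω : ℤ_[2]) : ℕ := (PadicInt.toZModPow (4 * k ^ 2) ω).val

/-- The points at one of the first `k` positions of their block of level `k`. -/
def window (k : ℕ) : Set ℤ_[2] := {ω | phase k ω < k}

lemma factorsThrough_phase {k N : ℕ} (h : 4 * k ^ 2 ≤ N) :
    (phase k).FactorsThrough (PadicInt.toZModPow N) :=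
  fun _ _ hω => congrArg ZMod.val (factorsThrough_toZModPow h hω)

lemma phase_eq_iff {k i : ℕ} (hi : i < 2 ^ (4 * k ^ 2)) (ω : ℤ_[2]) :
    phase k ω = i ↔ PadicInt.toZModPow (4 * k ^ 2) ω = i := by
  rw [phase, ← ZMod.val_injective _ |>.eq_iff, ZMod.val_natCast_of_lt hi]

lemma phase_natCast_add {k i : ℕ} {ω : ℤ_[2]} (hω : phase k ω = 0) (hi : i < 2 ^ (4 * k ^ 2)) :
    phase k (i + ω) = i := by
  rw [phase_eq_iff (by positivity), Nat.cast_zero] at hω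
  rw [phase_eq_iff hi, map_add, map_natCast, hω, add_zero]

lemma lt_two_pow_four_mul_sq (k : ℕ) : k < 2 ^ (4 * k ^ 2) :=
  k.lt_two_pow_self.trans_le (Nat.pow_le_pow_right two_pos (by nlinarith))

lemma succ_mul_mul_two_pow_le {k j : ℕ} (h : k < j) :
    (k + 1) * j * (2 ^ (4 * k ^ 2) * 2 ^ (j + 1)) ≤ 2 ^ (4 * j ^ 2) := by
  have hj : j ≤ 2 ^ j := j.lt_two_pow_self.le
  calc (k + 1) * j * (2 ^ (4 * k ^ 2) * 2 ^ (j + 1))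
      ≤ 2 ^ j * 2 ^ j * (2 ^ (4 * k ^ 2) * 2 ^ (j + 1)) := by gcongr; lia
    _ = 2 ^ (j + j + (4 * k ^ 2 + (j + 1))) := by simp only [pow_add]
    _ ≤ 2 ^ (4 * j ^ 2) := Nat.pow_le_pow_right two_pos (by nlinarith)

variable [MeasurableSpace ℤ_[2]] [BorelSpace ℤ_[2]]

lemma measurable_phase (k : ℕ) : Measurable (phase k) :=
  ((isLocallyConstant_toZModPow (4 * k ^ 2)).comp ZMod.val).continuous.measurable

lemma measurableSet_window (k : ℕ) : MeasurableSet (window k) :=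
  measurable_phase k measurableSet_Iio

section Measure

variable (m : Measure ℤ_[2]) [IsProbabilityMeasure m] [m.IsAddLeftInvariant]

lemma measure_phase_eq {k i : ℕ} (hi : i < 2 ^ (4 * k ^ 2)) :
    m {ω | phase k ω = i} = (2 ^ (4 * k ^ 2))⁻¹ := by
  simp only [phase_eq_iff hi]
  exact_mod_cast measure_toZModPow_preimage_singleton m (4 * k ^ 2) i

lemma measure_window_le (k : ℕ) : m (window k) ≤ k * (2 ^ (4 * k ^ 2))⁻¹ :=
  calc m (window k) = m (⋃ i ∈ Finset.range k, {ω | phase k ω = i}) := by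
        congr 1; ext ω; simp [window]
    _ ≤ ∑ i ∈ Finset.range k, m {ω | phase k ω = i} := measure_biUnion_finset_le _ _
    _ = ∑ i ∈ Finset.range k, (2 ^ (4 * k ^ 2))⁻¹ := Finset.sum_congr rfl fun i hi =>
        measure_phase_eq m ((Finset.mem_range.1 hi).trans (lt_two_pow_four_mul_sq k))
    _ = k * (2 ^ (4 * k ^ 2))⁻¹ := by simp

lemma succ_mul_measure_window_le {k j : ℕ} (h : k < j) :
    (k + 1) * m (window j) ≤ (2 ^ (4 * k ^ 2))⁻¹ * 2⁻¹ ^ (j + 1) := by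
  have harith : ((k + 1) * j * (2 ^ (4 * k ^ 2) * 2 ^ (j + 1)) : ℝ≥0∞) ≤ 2 ^ (4 * j ^ 2) :=
    mod_cast succ_mul_mul_two_pow_le h
  rw [← ENNReal.inv_pow, ← ENNReal.mul_inv (by simp) (by simp), ENNReal.le_inv_iff_mul_le]
  calc (k + 1) * m (window j) * (2 ^ (4 * k ^ 2) * 2 ^ (j + 1))
      ≤ (k + 1 : ℝ≥0∞) * (j * (2 ^ (4 * j ^ 2))⁻¹) * (2 ^ (4 * k ^ 2) * 2 ^ (j + 1)) := by
        gcongr; exact measure_window_le m j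
    _ = (k + 1 : ℝ≥0∞) * j * (2 ^ (4 * k ^ 2) * 2 ^ (j + 1)) * (2 ^ (4 * j ^ 2))⁻¹ := by ring
    _ ≤ (2 : ℝ≥0∞) ^ (4 * j ^ 2) * (2 ^ (4 * j ^ 2))⁻¹ := by gcongr
    _ ≤ 1 := ENNReal.mul_inv_le_one _

lemma succ_mul_tsum_measure_window_le (k : ℕ) :
    (k + 1) * ∑' l, m (window (l + (k + 1))) ≤ (2 ^ (4 * k ^ 2))⁻¹ * 2⁻¹ ^ (k + 1) := by
  have hgeom : ∑' l : ℕ, (2⁻¹ : ℝ≥0∞) ^ (l + (k + 1) + 1) = 2⁻¹ ^ (k + 1) := by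
    simp only [add_right_comm _ (k + 1), pow_add _ _ (k + 1), ENNReal.tsum_mul_right,
      ENNReal.tsum_geometric_add_one, ENNReal.one_sub_inv_two, inv_inv]
    rw [ENNReal.inv_mul_cancel (by simp) (by simp), one_mul]
  rw [← ENNReal.tsum_mul_left, ← hgeom, ← ENNReal.tsum_mul_left]
  exact ENNReal.tsum_le_tsum fun l => succ_mul_measure_window_le m (by lia)

end Measure

end Blocks

section Overwrite

variable {B : Type} (W : ℕ → ℕ → B) (b : B)

/-- The `k`-th approximation: starting from the constant `b`, stages `j < k` successively write the
first `j` symbols of the pattern `W j` at the beginning of every block of level `j`. -/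
noncomputable def overwrite : ℕ → ℤ_[2] → B
  | 0, _ => b
  | k + 1, ω => if phase k ω < k then W k (phase k ω) else overwrite k ω

/-- The observable left after all overwritings, well defined almost everywhere. -/
noncomputable def overwriteLim : ℤ_[2] → B := stableLimit (overwrite W b) window

lemma overwrite_succ_of_mem {k : ℕ} {ω : ℤ_[2]} (hω : ω ∈ window k) :
    overwrite W b (k + 1) ω = W k (phase k ω) := if_pos hω

lemma overwrite_succ_of_notMem (k : ℕ) (ω : ℤ_[2]) (hω : ω ∉ window k) :
    overwrite W b (k + 1) ω = overwrite W b k ω := if_neg hω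

lemma factorsThrough_overwrite (k : ℕ) :
    (overwrite W b k).FactorsThrough (PadicInt.toZModPow (4 * k ^ 2)) := by
  induction k with
  | zero => exact fun _ _ _ => rfl
  | succ k ih =>
    intro ω ω' hω
    have hle : 4 * k ^ 2 ≤ 4 * (k + 1) ^ 2 := by gcongr; lia
    simp only [overwrite, factorsThrough_phase hle hω, ih (factorsThrough_toZModPow hle hω)]

lemma overwriteLim_natCast_add {k i : ℕ} {ω : ℤ_[2]} (hi : i < k) (hω : phase k ω = 0)
    (hlater : ∀ j > k, (i + ω : ℤ_[2]) ∉ window j) : overwriteLim W b (i + ω) = W k i := by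
  have hphase : phase k (i + ω) = i := phase_natCast_add hω (hi.trans (lt_two_pow_four_mul_sq k))
  have hmem : (i + ω : ℤ_[2]) ∈ window k := hphase.trans_lt hi
  rw [overwriteLim, stableLimit_eq (overwrite_succ_of_notMem W b) hlater,
    overwrite_succ_of_mem W b hmem, hphase]

variable [MeasurableSpace ℤ_[2]] [BorelSpace ℤ_[2]]

lemma measurable_overwrite [MeasurableSpace B] (k : ℕ) : Measurable (overwrite W b k) := by
  induction k with
  | zero => exact measurable_const
  | succ k ih =>
    exact Measurable.ite (measurableSet_window k) (measurable_from_nat.comp (measurable_phase k)) ih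

lemma measurable_overwriteLim [MeasurableSpace B] : Measurable (overwriteLim W b) :=
  measurable_stableLimit (overwrite_succ_of_notMem W b) (measurable_overwrite W b)
    measurableSet_window

variable (m : Measure ℤ_[2]) [IsProbabilityMeasure m] [m.IsAddLeftInvariant]

lemma measure_overwrite_ne_overwriteLim_le (k : ℕ) :
    m {ω | overwrite W b k ω ≠ overwriteLim W b ω} ≤ 2⁻¹ ^ k := by
  cases k with
  | zero => simpa only [pow_zero] using prob_le_one
  | succ k =>
    calc m {ω | overwrite W b (k + 1) ω ≠ overwriteLim W b ω}
        ≤ ∑' l, m (window (l + (k + 1))) :=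
          measure_ne_stableLimit_le (overwrite_succ_of_notMem W b) m (k + 1)
      _ ≤ (k + 1) * ∑' l, m (window (l + (k + 1))) := le_mul_of_one_le_left' le_add_self
      _ ≤ (2 ^ (4 * k ^ 2))⁻¹ * 2⁻¹ ^ (k + 1) := succ_mul_tsum_measure_window_le m k
      _ ≤ 2⁻¹ ^ (k + 1) := mul_le_of_le_one_left' (by simp [one_le_pow₀])

lemma measure_iUnion_preimage_window_lt (k : ℕ) :
    m (⋃ i ∈ Finset.range k, ⋃ l, ((i : ℤ_[2]) + ·) ⁻¹' window (l + (k + 1))) <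
      m {ω | phase k ω = 0} :=
  calc m (⋃ i ∈ Finset.range k, ⋃ l, ((i : ℤ_[2]) + ·) ⁻¹' window (l + (k + 1)))
      ≤ ∑ i ∈ Finset.range k, ∑' l, m (((i : ℤ_[2]) + ·) ⁻¹' window (l + (k + 1))) :=
        (measure_biUnion_finset_le _ _).trans (Finset.sum_le_sum fun _ _ => measure_iUnion_le _)
    _ = k * ∑' l, m (window (l + (k + 1))) := by simp [measure_preimage_add]
    _ ≤ (k + 1) * ∑' l, m (window (l + (k + 1))) := by gcongr; exact le_self_add
    _ ≤ (2 ^ (4 * k ^ 2))⁻¹ * 2⁻¹ ^ (k + 1) := succ_mul_tsum_measure_window_le m k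
    _ < (2 ^ (4 * k ^ 2))⁻¹ * 1 :=
        ENNReal.mul_lt_mul_right (by simp) (by simp)
          (pow_lt_one₀ zero_le (ENNReal.inv_lt_one.2 ENNReal.one_lt_two) k.succ_ne_zero)
    _ = m {ω | phase k ω = 0} := by rw [mul_one, measure_phase_eq m (by positivity)]

lemma measure_overwriteLim_natCast_add_eq_pos (k : ℕ) :
    0 < m {ω | ∀ i < k, overwriteLim W b (i + ω) = W k i} := by
  refine (tsub_pos_of_lt (measure_iUnion_preimage_window_lt m k)).trans_le
    (le_measure_sdiff.trans (measure_mono ?_))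
  rintro ω ⟨hω, hlater⟩ i hi
  refine overwriteLim_natCast_add W b hi hω fun j hj hmem => hlater ?_
  simp only [Set.mem_iUnion]
  exact ⟨i, Finset.mem_range.2 hi, j - (k + 1), by simpa [Nat.sub_add_cancel hj] using hmem⟩

lemma tendsto_dbarM_overwrite [MeasurableSpace B] [MeasurableEq B]
    {T : ℤ_[2] → ℤ_[2]} (hT : MeasurePreserving T m m) :
    Tendsto (fun k => dbarM (itineraryLaw hT (measurable_overwrite W b k))
      (itineraryLaw hT (measurable_overwriteLim W b))) atTop (𝓝 0) := by
  refine squeeze_zero (g := fun k => (2⁻¹ : ℝ) ^ k) (fun k => dbarM_nonneg _ _) (fun k => ?_)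
    (tendsto_pow_atTop_nhds_zero_of_lt_one (by norm_num) (by norm_num))
  refine (dbarM_itineraryLaw_le hT _ _).trans ?_
  simpa using ENNReal.toReal_mono (by simp) (measure_overwrite_ne_overwriteLim_le W b m k)

variable {W} in
lemma isOpenPosMeasure_itineraryLaw_overwriteLim [TopologicalSpace B] [MeasurableSpace B]
    (hW : ∀ U : Set (ℕ → B), IsOpen U → U.Nonempty → ∃ᶠ k in atTop, W k ∈ U) :
    (itineraryLaw (measurePreserving_add_left m 1) (measurable_overwriteLim W b) :
      Measure (ℕ → B)).IsOpenPosMeasure := by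
  refine ⟨fun U hU ⟨x, hx⟩ => ?_⟩
  obtain ⟨I, u, hu, hIU⟩ := isOpen_pi_iff.1 hU x hx
  obtain ⟨k, hk, hWk⟩ := frequently_atTop.1 (hW ((I : Set ℕ).pi u)
    (isOpen_set_pi I.finite_toSet fun i hi => (hu i hi).1) ⟨x, fun i hi => (hu i hi).2⟩)
    (I.sup id + 1)
  have hsub : {ω | ∀ i < k, overwriteLim W b (i + ω) = W k i} ⊆
      itinerary (1 + ·) (overwriteLim W b) ⁻¹' U := fun ω hω => hIU fun i hi => by
    have hik : i < k := (Nat.lt_succ_of_le (Finset.le_sup (f := id) hi)).trans_le hk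
    rw [itinerary_one_add_apply, hω i hik]
    exact hWk i hi
  have hG := measurable_itinerary (measurable_const_add 1) (measurable_overwriteLim W b)
  exact ((measure_overwriteLim_natCast_add_eq_pos W b m k).trans_le
    ((measure_mono hsub).trans (Measure.le_map_apply hG.aemeasurable U))).ne'

end Overwrite

lemma exists_seq_frequently_mem_isOpen (X : Type*) [TopologicalSpace X]
    [TopologicalSpace.SeparableSpace X] [Nonempty X] :
    ∃ W : ℕ → X, ∀ U, IsOpen U → U.Nonempty → ∃ᶠ k in atTop, W k ∈ U := by
  refine ⟨fun k => TopologicalSpace.denseSeq X k.unpair.1, fun U hU hne => ?_⟩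
  obtain ⟨_, hn, n, rfl⟩ := (TopologicalSpace.denseRange_denseSeq X).inter_open_nonempty U hU hne
  refine frequently_atTop.2 fun N => ⟨Nat.pair n N, Nat.right_le_pair n N, ?_⟩
  simpa only [Nat.unpair_pair] using hn

theorem statement9_general {B : Type} [TopologicalSpace B] [SecondCountableTopology B] [T2Space B]
    [Nontrivial B] [MeasurableSpace B] [BorelSpace B] :
    ∃ (X : ℕ → Set (ℕ → B)) (μ : ProbabilityMeasure (ℕ → B)),
      (∀ k : ℕ, ShiftSpace (X k) ∧
        ∃ (x : ℕ → B) (p : ℕ), 0 < p ∧ shift^[p] x = x ∧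
          X k = {y | ∃ j : ℕ, y = shift^[j] x}) ∧
      invariantPM μ ∧ ErgodicPM μ ∧
      (∀ U : Set (ℕ → B), IsOpen U → U.Nonempty → 0 < μ U) ∧
      Filter.Tendsto (fun k => hausdist dbarM (Msigma (X k)) {μ}) Filter.atTop (nhds 0) ∧
      ¬ ∃ Z : Set (ℕ → B), ShiftSpace Z ∧ Msigma Z = {μ} := by
  borelize ℤ_[2]
  let m : Measure ℤ_[2] := Measure.addHaarMeasure ⊤
  have : IsProbabilityMeasure m := ⟨Measure.addHaarMeasure_self⟩
  have hT : Ergodic (1 + ·) m := ergodic_one_add m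
  obtain ⟨W, hW⟩ := exists_seq_frequently_mem_isOpen (ℕ → B)
  obtain ⟨b⟩ : Nonempty B := inferInstance
  let x (k : ℕ) : ℕ → B := itinerary (1 + ·) (overwrite W b k) 0
  have hper (k) : Function.IsPeriodicPt shift (2 ^ (4 * k ^ 2)) (x k) :=
    isPeriodicPt_shift_itinerary_one_add (factorsThrough_overwrite W b k) 0
  let μ := itineraryLaw hT.toMeasurePreserving (measurable_overwriteLim W b)
  have : (μ : Measure (ℕ → B)).IsOpenPosMeasure := isOpenPosMeasure_itineraryLaw_overwriteLim b m hW
  refine ⟨fun k => forwardOrbit shift (x k), μ, fun k => ⟨shiftSpace_forwardOrbit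
    ⟨_, by positivity, hper k⟩, x k, _, by positivity, hper k, rfl⟩,
    (measurePreserving_shift_itineraryLaw _ _).map_eq, ergodicPM_itineraryLaw hT _,
    fun U hU hne => ?_, ?_, not_exists_Msigma_eq_singleton μ⟩
  · rw [← ENNReal.coe_pos, ProbabilityMeasure.ennreal_coeFn_eq_coeFn_toMeasure]
    exact hU.measure_pos _ hne
  · simp only [x, Msigma_forwardOrbit_itinerary_one_add m (factorsThrough_overwrite W b _)
      (measurable_overwrite W b _), hausdist_singleton]
    exact tendsto_dbarM_overwrite W b m hT.toMeasurePreserving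

/-- there is a sequence of periodic-orbit shift spaces whose simplices of
invariant measures converge in `d̄_M^H` to a singleton `{μ}` with `μ` ergodic and fully
supported; in particular `{μ}` is not the simplex of invariant measures of any shift
space. -/
theorem statement9 (hA : 2 ≤ Fintype.card A) :
    ∃ (X : ℕ → Set (ℕ → A)) (μ : ProbabilityMeasure (ℕ → A)),
      (∀ k : ℕ, ShiftSpace (X k) ∧
        ∃ (x : ℕ → A) (p : ℕ), 0 < p ∧ shift^[p] x = x ∧
          X k = {y | ∃ j : ℕ, y = shift^[j] x}) ∧
      invariantPM μ ∧ ErgodicPM μ ∧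
      (∀ U : Set (ℕ → A), IsOpen U → U.Nonempty → 0 < μ U) ∧
      Filter.Tendsto (fun k => hausdist dbarM (Msigma (X k)) {μ}) Filter.atTop (nhds 0) ∧
      ¬ ∃ Z : Set (ℕ → A), ShiftSpace Z ∧ Msigma Z = {μ} := by
  have : Nontrivial A := Fintype.one_lt_card_iff_nontrivial.1 hA
  exact statement9_general

end DbarPaper
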